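/- arXiv:2512.05645 — 6 statements merged into one kernel-verified Lean document; each statement's English description precedes it below -/
import Mathlib

section
/- Let n ≥ 1 and define, for vectors x, y ∈ ℝ^n with all entries strictly positive, Q(x,y) := ((∑_{i=1}^n x_i − ∑_{i=1}^n y_i)·(∑_{i=1}^n y_i² − ∑_{i=1}^n x_i²)) / (∑_{i=1}^n x_i³ + ∑_{i=1}^n y_i³). Then with c* := (7√7 − 17)/27, for all x, y ∈ ℝ^n with strictly positive entries, Q(x,y) < c*·n. -/
/-!
Since `Q` is symmetric and the bound is positive, one may assume `∑ x > ∑ y` and `∑ y² > ∑ x²`.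
Let `a`, `b` be the means of the `x i`, `y i`, and `m` the mean of the `(y i)²`. By the power mean
inequality the means of `(x i)²`, `(x i)³` are at least `a²`, `a³`, and by Cauchy–Schwarz the mean
of `(y i)³` is at least `m² / b`; the latter is strict, since for a constant vector `y` the two
assumptions contradict each other (`strict_cauchy`). It remains to show
`b (a - b) (m - a²) ≤ c* (a³ b + m²)` for `0 < b < a` (`core_ineq`). The discriminant of this
quadratic in `m` is `b` times a cubic in `b` with a double root at `b = (2√7 - 1)/9 · a` and its third root at
`(20 - 4√7)/9 · a > a`, which is where `c*` comes from.
-/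

open Finset

/-- The quotient `Q(x,y)` of differences of power sums. -/
noncomputable def Q {n m : ℕ} (x : Fin n → ℝ) (y : Fin m → ℝ) : ℝ :=
  ((∑ i, x i - ∑ i, y i) * (∑ i, (y i)^2 - ∑ i, (x i)^2)) /
    (∑ i, (x i)^3 + ∑ i, (y i)^3)

/-- The three-variable inequality behind the bound; it is tight at
`b = (2√7 - 1)/9 · a`, `m = b (a - b) / (2 c*)`. -/
lemma core_ineq {c a b m : ℝ} (hc : c = (7 * Real.sqrt 7 - 17) / 27) (hc0 : 0 < c)
    (hb : 0 < b) (hab : b < a) :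
    b * (a - b) * (m - a ^ 2) ≤ c * (a ^ 3 * b + m ^ 2) := by
  have hr2 : Real.sqrt 7 ^ 2 = 7 := Real.sq_sqrt (by norm_num)
  have hr : Real.sqrt 7 ≤ 11 / 4 := by
    rw [Real.sqrt_le_left (by norm_num)]; norm_num
  set r := Real.sqrt 7 with hrdef
  have hr3 : r ^ 3 = 7 * r := by rw [pow_succ, hr2]
  -- completing the square in `m`, then factoring the discriminant
  have key : 4 * c * (c * (a ^ 3 * b + m ^ 2) - b * (a - b) * (m - a ^ 2)) =
      (2 * c * m - b * (a - b)) ^ 2 +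
        b * ((b - (2 * r - 1) / 9 * a) ^ 2 * ((20 - 4 * r) / 9 * a - b)) := by
    subst hc
    ring_nf
    simp only [hr2, hr3]
    ring
  have h1 : 0 ≤ (20 - 4 * r) / 9 * a - b := by
    nlinarith
  have h2 : 0 ≤ 4 * c * (c * (a ^ 3 * b + m ^ 2) - b * (a - b) * (m - a ^ 2)) := by
    rw [key]; positivity
  have := nonneg_of_mul_nonneg_right h2 (by positivity)
  linarith

/-- Cauchy–Schwarz for `√y` and `y√y`, strict because `y` is not constant. -/
lemma strict_cauchy {n : ℕ} {y : Fin n → ℝ} (hy : ∀ i, 0 < y i) (hY1 : 0 < ∑ i, y i)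
    (hne : ∃ i, (∑ j, y j) * y i ≠ ∑ j, y j ^ 2) :
    (∑ i, y i ^ 2) ^ 2 < (∑ i, y i) * ∑ i, y i ^ 3 := by
  obtain ⟨i, hi⟩ := hne
  set S := ∑ j, y j with hS
  set T := ∑ j, y j ^ 2 with hT
  have hpos : 0 < ∑ j, y j * (S * y j - T) ^ 2 := by
    refine Finset.sum_pos' (fun j _ => mul_nonneg (hy j).le (sq_nonneg _)) ⟨i, mem_univ i, ?_⟩
    have : S * y i - T ≠ 0 := sub_ne_zero.mpr hi
    have := hy i
    positivity
  have hexp : ∑ j, y j * (S * y j - T) ^ 2 = S * (S * ∑ j, y j ^ 3 - T ^ 2) := by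
    have : ∀ j, y j * (S * y j - T) ^ 2 =
        S ^ 2 * y j ^ 3 - 2 * S * T * y j ^ 2 + T ^ 2 * y j := fun j => by ring
    simp only [this, sum_add_distrib, sum_sub_distrib, ← mul_sum]
    rw [← hS, ← hT]; ring
  rw [hexp] at hpos
  have := pos_of_mul_pos_right hpos hY1.le
  linarith

/-- The bound with the denominator cleared, in the case where both factors of the numerator
are positive. -/
lemma main_case {n : ℕ} (hn : 1 ≤ n) {c : ℝ} (hc : c = (7 * Real.sqrt 7 - 17) / 27) (hc0 : 0 < c)
    {x y : Fin n → ℝ} (hx : ∀ i, 0 < x i) (hy : ∀ i, 0 < y i)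
    (hA : ∑ i, y i < ∑ i, x i) (hB : ∑ i, x i ^ 2 < ∑ i, y i ^ 2) :
    (∑ i, x i - ∑ i, y i) * (∑ i, y i ^ 2 - ∑ i, x i ^ 2) <
      c * n * (∑ i, x i ^ 3 + ∑ i, y i ^ 3) := by
  have hN : (0 : ℝ) < n := by exact_mod_cast hn
  have : Nonempty (Fin n) := ⟨⟨0, hn⟩⟩
  have hY1 : 0 < ∑ i, y i := sum_pos (fun i _ => hy i) univ_nonempty
  have hX2 : (∑ i, x i) ^ 2 ≤ n * ∑ i, x i ^ 2 := by
    simpa using sq_sum_le_card_mul_sum_sq (s := univ) (f := x)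
  have hX3 : (∑ i, x i) ^ 3 ≤ n ^ 2 * ∑ i, x i ^ 3 := by
    simpa using pow_sum_le_card_mul_sum_pow (s := univ) (fun i _ => (hx i).le) 2
  have hne : ∃ i, (∑ j, y j) * y i ≠ ∑ j, y j ^ 2 := by
    by_contra! h
    -- summing over `i`: for constant `y` the power mean inequality is an equality
    have hs : (∑ j, y j) ^ 2 = n * ∑ j, y j ^ 2 := by
      have : ∑ i, (∑ j, y j) * y i = ∑ _i : Fin n, ∑ j, y j ^ 2 := sum_congr rfl fun i _ => h i
      rw [← mul_sum] at this
      simpa [sq] using this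
    nlinarith
  have hY := strict_cauchy hy hY1 hne
  generalize ∑ i, x i = X1 at *
  generalize ∑ i, y i = Y1 at *
  generalize ∑ i, x i ^ 2 = X2 at *
  generalize ∑ i, y i ^ 2 = Y2 at *
  generalize ∑ i, x i ^ 3 = X3 at *
  generalize ∑ i, y i ^ 3 = Y3 at *
  generalize (n : ℝ) = N at *
  -- `core_ineq` at the means scaled by `N`, so that `m` becomes `N * Y2`
  have h := core_ineq (m := N * Y2) hc hc0 hY1 hA
  have h1 : N * (Y1 * ((X1 - Y1) * (Y2 - X2))) ≤ Y1 * (X1 - Y1) * (N * Y2 - X1 ^ 2) := by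
    have : 0 < Y1 * (X1 - Y1) := mul_pos hY1 (sub_pos.mpr hA)
    nlinarith
  have h2 : c * (X1 ^ 3 * Y1 + (N * Y2) ^ 2) < N * (Y1 * (c * N * (X3 + Y3))) := by
    have e1 : X1 ^ 3 * Y1 ≤ N ^ 2 * X3 * Y1 := mul_le_mul_of_nonneg_right hX3 hY1.le
    have e2 : N ^ 2 * Y2 ^ 2 < N ^ 2 * (Y1 * Y3) := mul_lt_mul_of_pos_left hY (by positivity)
    have e3 := mul_lt_mul_of_pos_left (add_lt_add_of_le_of_lt e1 e2) hc0
    linarith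
  have h3 := lt_of_mul_lt_mul_left ((h1.trans h).trans_lt h2) hN.le
  exact lt_of_mul_lt_mul_left h3 hY1.le

theorem stmt_0 (n : ℕ) (hn : 1 ≤ n) (x y : Fin n → ℝ)
    (hx : ∀ i, 0 < x i) (hy : ∀ i, 0 < y i) :
    Q x y < (7 * Real.sqrt 7 - 17) / 27 * n := by
  have hc0 : 0 < (7 * Real.sqrt 7 - 17) / 27 := by
    have : (5 / 2 : ℝ) < Real.sqrt 7 := by
      rw [Real.lt_sqrt (by norm_num)]; norm_num
    linarith
  have hN : (0 : ℝ) < n := by exact_mod_cast hn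
  have : Nonempty (Fin n) := ⟨⟨0, hn⟩⟩
  have hX3 : 0 < ∑ i, x i ^ 3 := sum_pos (fun i _ => pow_pos (hx i) 3) univ_nonempty
  have hY3 : 0 < ∑ i, y i ^ 3 := sum_pos (fun i _ => pow_pos (hy i) 3) univ_nonempty
  unfold Q
  rw [div_lt_iff₀ (add_pos hX3 hY3)]
  have hR : 0 < (7 * Real.sqrt 7 - 17) / 27 * n * (∑ i, x i ^ 3 + ∑ i, y i ^ 3) :=
    mul_pos (mul_pos hc0 hN) (add_pos hX3 hY3)
  by_cases hpos : 0 < (∑ i, x i - ∑ i, y i) * (∑ i, y i ^ 2 - ∑ i, x i ^ 2)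
  · rcases mul_pos_iff.mp hpos with ⟨hA, hB⟩ | ⟨hA, hB⟩
    · exact main_case hn rfl hc0 hx hy (sub_pos.mp hA) (sub_pos.mp hB)
    · have := main_case hn rfl hc0 hy hx (sub_neg.mp hA) (sub_neg.mp hB)
      linarith
  · exact (not_lt.mp hpos).trans_lt hR
end

section
/- With c* := (7√7 − 17)/27, the limit as n → ∞ of (1/n)·sup{ Q(x,y) : x, y ∈ ℝ^n with strictly positive entries } equals c*. -/
/-!
Write `w = √7` and `c = (7w - 17)/27`.

*Upper bound.*  Let `a, b` be the means of `x, y`, and let `s` be the second moment of `y`.  As `Q`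
is symmetric and vanishes when `a = b`, suppose `b < a`.  Cauchy-Schwarz shows that the second and third moments of `x` are at least `a²`
and `a³`, and that the third moment of `y` is at least `s²/b`, so `Q x y ≤ c n` reduces to
`b (a - b) (s - a²) ≤ c (a³ b + s²)`.  As a quadratic in `s` this has nonpositive discriminant,
because the cubic in `b` that governs it factors as a square times a linear form that is
nonnegative on `b ≤ a` (`key_poly`).

*Lower bound.*  Equality in these estimates forces `x` to be constant and `y` to take the two values
`0` and `t = w + 2` (for `x = 1`), the latter with frequency `p = (16 - 5w)/27`.  Taking `t` with
multiplicity `⌊p n⌋` and `1/n` in place of `0` gives admissible vectors with `Q/n → c`.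
-/

open Finset Filter

/-- The sharp scalar inequality: the discriminant in `s` vanishes at `b = (2√7 - 1)/9 · a`. -/
lemma key_poly {w a b s : ℝ} (hw : w ^ 2 = 7) (hw0 : 0 ≤ w) (hb : 0 < b) (hab : b < a) :
    b * (a - b) * (s - a ^ 2) ≤ (7 * w - 17) / 27 * (a ^ 3 * b + s ^ 2) := by
  have hw1 : (2.6 : ℝ) < w := by nlinarith
  have hw2 : w < 2.7 := by nlinarith
  have h1 : 0 ≤ (20 - 4 * w) / 9 * a - b := by nlinarith
  have h2 : 0 ≤ b * ((b - (2 * w - 1) / 9 * a) ^ 2 * ((20 - 4 * w) / 9 * a - b)) := by positivity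
  have h3 := sq_nonneg (2 * ((7 * w - 17) / 27) * s - b * (a - b))
  have hw3 : w ^ 3 = 7 * w := by rw [pow_succ, hw]
  have h4 : 0 ≤ 4 * ((7 * w - 17) / 27) *
      ((7 * w - 17) / 27 * (a ^ 3 * b + s ^ 2) - b * (a - b) * (s - a ^ 2)) := by
    have e : 4 * ((7 * w - 17) / 27) *
        ((7 * w - 17) / 27 * (a ^ 3 * b + s ^ 2) - b * (a - b) * (s - a ^ 2)) =
        (2 * ((7 * w - 17) / 27) * s - b * (a - b)) ^ 2 +
        b * ((b - (2 * w - 1) / 9 * a) ^ 2 * ((20 - 4 * w) / 9 * a - b)) := by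
      ring_nf
      simp only [hw, hw3]
      ring
    rw [e]; positivity
  have h5 : 0 < 4 * ((7 * w - 17) / 27) := by linarith
  have := nonneg_of_mul_nonneg_right h4 h5
  linarith

/-- Consecutive power sums satisfy `M₂² ≤ M₁ M₃`. -/
lemma sq_sum_sq_le {n : ℕ} (x : Fin n → ℝ) (hx : ∀ i, 0 < x i) :
    (∑ i, x i ^ 2) ^ 2 ≤ (∑ i, x i) * ∑ i, x i ^ 3 :=
  Finset.sum_sq_le_sum_mul_sum_of_sq_le_mul _ (fun i _ => (hx i).le)
    (fun i _ => (pow_pos (hx i) 3).le) (fun i _ => le_of_eq (by ring))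

/-- The upper bound for `Q`, cleared of its denominator, when `x` has the larger mean. -/
lemma num_le {n : ℕ} (hn : 0 < n) (x y : Fin n → ℝ) (hx : ∀ i, 0 < x i) (hy : ∀ i, 0 < y i)
    (h1 : ∑ i, y i < ∑ i, x i) :
    (∑ i, x i - ∑ i, y i) * (∑ i, (y i)^2 - ∑ i, (x i)^2) ≤
      (7 * Real.sqrt 7 - 17) / 27 * n * (∑ i, (x i)^3 + ∑ i, (y i)^3) := by
  have hne : (Finset.univ : Finset (Fin n)).Nonempty := ⟨⟨0, hn⟩, Finset.mem_univ _⟩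
  have hn' : (0 : ℝ) < n := by exact_mod_cast hn
  have cx := sq_sum_sq_le x hx
  have cy := sq_sum_sq_le y hy
  have c1 : (∑ i, x i) ^ 2 ≤ n * ∑ i, x i ^ 2 := by
    simpa using sq_sum_le_card_mul_sum_sq (s := Finset.univ) (f := x)
  have hb : 0 < ∑ i, y i := Finset.sum_pos (fun i _ => hy i) hne
  generalize ∑ i, x i = A at *
  generalize ∑ i, y i = B at *
  generalize ∑ i, x i ^ 2 = A2 at *
  generalize ∑ i, y i ^ 2 = B2 at *
  generalize ∑ i, x i ^ 3 = A3 at *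
  generalize ∑ i, y i ^ 3 = B3 at *
  have hw : Real.sqrt 7 ^ 2 = 7 := Real.sq_sqrt (by norm_num)
  have hw0 := Real.sqrt_nonneg 7
  generalize Real.sqrt 7 = w at *
  have hc : 0 < (7 * w - 17) / 27 := by
    have : (2.6 : ℝ) < w := by nlinarith
    linarith
  have hA : 0 < A := hb.trans h1
  have key := key_poly (s := B2 / n) hw hw0 (div_pos hb hn') (div_lt_div_of_pos_right h1 hn')
  generalize (7 * w - 17) / 27 = c at *
  have hA2 : A ^ 2 / n ≤ A2 := by rw [div_le_iff₀ hn']; linarith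
  have hA3 : A ^ 3 / n ^ 2 ≤ A3 := by
    have : (A ^ 2 / n) ^ 2 ≤ A * A3 := (pow_le_pow_left₀ (by positivity) hA2 2).trans cx
    have e : (A ^ 2 / n) ^ 2 = A * (A ^ 3 / n ^ 2) := by field_simp
    rw [e] at this
    exact le_of_mul_le_mul_left this hA
  have hB3 : B2 ^ 2 / B ≤ B3 := by rw [div_le_iff₀ hb]; linarith
  calc (A - B) * (B2 - A2) ≤ (A - B) * (B2 - A ^ 2 / n) := by
        apply mul_le_mul_of_nonneg_left _ (by linarith); linarith
    _ = (B / n * (A / n - B / n) * (B2 / n - (A / n) ^ 2)) * (n ^ 3 / B) := by field_simp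
    _ ≤ (c * ((A / n) ^ 3 * (B / n) + (B2 / n) ^ 2)) * (n ^ 3 / B) :=
        mul_le_mul_of_nonneg_right key (by positivity)
    _ = c * n * (A ^ 3 / n ^ 2 + B2 ^ 2 / B) := by field_simp
    _ ≤ c * n * (A3 + B3) := by gcongr

lemma Q_le {n : ℕ} (hn : 0 < n) (x y : Fin n → ℝ) (hx : ∀ i, 0 < x i) (hy : ∀ i, 0 < y i) :
    Q x y ≤ (7 * Real.sqrt 7 - 17) / 27 * n := by
  have hne : (Finset.univ : Finset (Fin n)).Nonempty := ⟨⟨0, hn⟩, Finset.mem_univ _⟩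
  have hx3 : 0 < ∑ i, x i ^ 3 := Finset.sum_pos (fun i _ => pow_pos (hx i) 3) hne
  have hy3 : 0 < ∑ i, y i ^ 3 := Finset.sum_pos (fun i _ => pow_pos (hy i) 3) hne
  have hc : 0 ≤ (7 * Real.sqrt 7 - 17) / 27 := by
    have : (2.6 : ℝ) < Real.sqrt 7 := Real.lt_sqrt_of_sq_lt (by norm_num)
    linarith
  have hr : 0 ≤ (7 * Real.sqrt 7 - 17) / 27 * n * (∑ i, (x i)^3 + ∑ i, (y i)^3) := by positivity
  unfold Q
  rw [div_le_iff₀ (by positivity)]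
  -- The numerator of `Q` is symmetric in `x` and `y`.
  rcases lt_trichotomy (∑ i, x i) (∑ i, y i) with h1 | h1 | h1
  · have := num_le hn y x hy hx h1
    linarith
  · rw [h1]; simpa using hr
  · exact num_le hn x y hx hy h1

/-- The near-extremal second vector: `k` entries equal to `t`, the others equal to `e`. -/
noncomputable def twoVal (n k : ℕ) (t e : ℝ) : Fin n → ℝ := fun i => if (i : ℕ) < k then t else e

lemma sum_twoVal {n k : ℕ} (hk : k ≤ n) (t e : ℝ) (j : ℕ) :
    ∑ i, twoVal n k t e i ^ j = k * t ^ j + (n - k) * e ^ j := by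
  have h : ∀ i : Fin n, twoVal n k t e i ^ j = (fun m : ℕ => if m < k then t ^ j else e ^ j) i := by
    intro i; simp only [twoVal]; split_ifs <;> rfl
  rw [Finset.sum_congr rfl (fun i _ => h i), Fin.sum_univ_eq_sum_range
    (fun m : ℕ => if m < k then t ^ j else e ^ j) n, ← Finset.sum_range_add_sum_Ico _ hk,
    Finset.sum_congr rfl (g := fun _ => t ^ j) (fun m hm => if_pos (Finset.mem_range.1 hm)),
    Finset.sum_congr rfl (g := fun _ => e ^ j)
      (fun m hm => if_neg (not_lt.2 (Finset.mem_Ico.1 hm).1))]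
  simp [Nat.cast_sub hk]

/-- The value of `Q/n` at the constant vector `1` and the two-valued vector, in terms of the
frequency `k/n`. -/
lemma Q_twoVal {n k : ℕ} (hn : 0 < n) (hk : k ≤ n) (t e : ℝ) :
    1 / (n : ℝ) * Q (fun _ : Fin n => (1 : ℝ)) (twoVal n k t e) =
      (1 - ((k / n : ℝ) * t + (1 - k / n) * e)) * ((k / n : ℝ) * t ^ 2 + (1 - k / n) * e ^ 2 - 1) /
        (1 + ((k / n : ℝ) * t ^ 3 + (1 - k / n) * e ^ 3)) := by
  have hn' : (n : ℝ) ≠ 0 := by positivity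
  have h1 := sum_twoVal hk t e 1
  simp only [pow_one] at h1
  unfold Q
  rw [h1, sum_twoVal hk, sum_twoVal hk]
  simp only [one_pow, Finset.sum_const, Finset.card_univ, Fintype.card_fin, nsmul_eq_mul, mul_one]
  have e1 : ∀ u v : ℝ, (k : ℝ) * u + (n - k) * v = n * ((k / n : ℝ) * u + (1 - k / n) * v) := by
    intro u v; field_simp
  rw [e1, e1, e1]
  generalize (k / n : ℝ) * t + (1 - k / n) * e = P
  generalize (k / n : ℝ) * t ^ 2 + (1 - k / n) * e ^ 2 = P2
  generalize (k / n : ℝ) * t ^ 3 + (1 - k / n) * e ^ 3 = P3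
  rw [show (n : ℝ) + n * P3 = n * (1 + P3) by ring,
    show ((n : ℝ) - n * P) * (n * P2 - n) = n * (n * ((1 - P) * (P2 - 1))) by ring,
    mul_div_mul_left _ _ hn', mul_div_assoc, ← mul_assoc, one_div, inv_mul_cancel₀ hn', one_mul]

theorem stmt_1 :
    Tendsto (fun n : ℕ =>
      (1 / (n : ℝ)) *
        sSup {q : ℝ | ∃ x y : Fin n → ℝ,
          (∀ i, 0 < x i) ∧ (∀ i, 0 < y i) ∧ q = Q x y})
      atTop (nhds ((7 * Real.sqrt 7 - 17) / 27)) := by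
  have hw : Real.sqrt 7 ^ 2 = 7 := Real.sq_sqrt (by norm_num)
  have hw1 : (2.6 : ℝ) < Real.sqrt 7 := Real.lt_sqrt_of_sq_lt (by norm_num)
  have hw2 : Real.sqrt 7 < 2.7 := (Real.sqrt_lt' (by norm_num)).2 (by norm_num)
  set w := Real.sqrt 7 with hwdef
  set p : ℝ := (16 - 5 * w) / 27 with hp
  have hp0 : 0 ≤ p := by rw [hp]; linarith
  have hp1 : p ≤ 1 := by rw [hp]; linarith
  have hk : ∀ n : ℕ, ⌊p * n⌋₊ ≤ n := fun n =>
    Nat.floor_le_of_le (mul_le_of_le_one_left (Nat.cast_nonneg n) hp1)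
  have hfreq : Tendsto (fun n : ℕ => (⌊p * n⌋₊ : ℝ) / n) atTop (nhds p) :=
    (tendsto_nat_floor_mul_div_atTop hp0).comp tendsto_natCast_atTop_atTop
  have heps : Tendsto (fun n : ℕ => 1 / (n : ℝ)) atTop (nhds 0) :=
    tendsto_one_div_atTop_nhds_zero_nat
  have hmom : ∀ j : ℕ, j ≠ 0 → Tendsto (fun n : ℕ => (⌊p * n⌋₊ / n : ℝ) * (w + 2) ^ j +
      (1 - ⌊p * n⌋₊ / n) * (1 / (n : ℝ)) ^ j) atTop (nhds (p * (w + 2) ^ j)) := by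
    intro j hj
    have := (hfreq.mul_const ((w + 2) ^ j)).add ((hfreq.const_sub 1).mul (heps.pow j))
    simpa [hj] using this
  have hlow : Tendsto (fun n : ℕ => 1 / (n : ℝ) *
      Q (fun _ : Fin n => (1 : ℝ)) (twoVal n ⌊p * n⌋₊ (w + 2) (1 / n))) atTop
      (nhds ((7 * w - 17) / 27)) := by
    have hw3 : w ^ 3 = 7 * w := by rw [pow_succ, hw]
    have hw4 : w ^ 4 = 49 := by
      rw [show w ^ 4 = (w ^ 2) ^ 2 by ring, hw]; norm_num
    have hden : 0 < 1 + p * (w + 2) ^ 3 := by positivity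
    have hval : (1 - p * (w + 2) ^ 1) * (p * (w + 2) ^ 2 - 1) / (1 + p * (w + 2) ^ 3) =
        (7 * w - 17) / 27 := by
      rw [div_eq_iff hden.ne', hp]
      ring_nf
      have hw5 : w ^ 5 = 49 * w := by rw [pow_succ, hw4]
      simp only [hw, hw3, hw4, hw5]
      ring
    rw [← hval]
    refine Tendsto.congr' ?_ ((((hmom 1 (by norm_num)).const_sub 1).mul
      ((hmom 2 (by norm_num)).sub_const 1)).div ((hmom 3 (by norm_num)).const_add 1) hden.ne')
    filter_upwards [eventually_gt_atTop 0] with n hn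
    rw [Q_twoVal hn (hk n)]
    simp
  refine tendsto_of_tendsto_of_tendsto_of_le_of_le' hlow tendsto_const_nhds ?_ ?_
  · filter_upwards [eventually_gt_atTop 0] with n hn
    have hn' : (0 : ℝ) < n := by exact_mod_cast hn
    refine mul_le_mul_of_nonneg_left (le_csSup ⟨(7 * w - 17) / 27 * n, ?_⟩ ?_) (by positivity)
    · rintro q ⟨x, y, hx, hy, rfl⟩
      exact Q_le hn x y hx hy
    · refine ⟨_, _, fun _ => one_pos, fun i => ?_, rfl⟩
      unfold twoVal
      split_ifs <;> positivity
  · filter_upwards [eventually_gt_atTop 0] with n hn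
    have hn' : (0 : ℝ) < n := by exact_mod_cast hn
    rw [one_div, inv_mul_le_iff₀ hn', mul_comm]
    refine csSup_le ⟨_, fun _ => 1, fun _ => 1, fun _ => one_pos, fun _ => one_pos, rfl⟩ ?_
    rintro q ⟨x, y, hx, hy, rfl⟩
    exact Q_le hn x y hx hy
end

section
/- For vectors x^{(n)} := (1,…,1, 1/n,…,1/n) ∈ ℝ^n (with ⌊p*·n⌋ entries equal to 1 and the remaining n − ⌊p*·n⌋ entries equal to 1/n) and y^{(n)} := (γ*,…,γ*) ∈ ℝ^n, where p* := (16 − 5√7)/27 and γ* := (√7 − 2)/3, one has Q(x^{(n)}, y^{(n)}) / n → c* := (7√7 − 17)/27 as n → ∞. -/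
/-!
After division by `n`, the `k`-th power sum of `x⁽ⁿ⁾` tends to `p*` for every `k ≥ 1`: the ones
contribute `⌊p* n⌋ / n → p*`, and the entries `1/n` contribute at most `(1/n)^k → 0`
(`tendsto_powerSum_xVec`). The `k`-th power sum of `y⁽ⁿ⁾` is exactly `n γ*^k`. Hence
`Q(x⁽ⁿ⁾, y⁽ⁿ⁾) / n` tends to `(p* - γ*) (γ*² - p*) / (p* + γ*³)`. Since `√7² = 7`, the constants
satisfy `p* + γ*³ = γ* - p* > 0`, so this limit is `p* - γ*² = (7√7 - 17)/27`.
-/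

open Finset Filter

/-- `p* = (16 - 5√7)/27`. -/
noncomputable def pStar : ℝ := (16 - 5 * Real.sqrt 7) / 27

/-- `γ* = (√7 - 2)/3`. -/
noncomputable def gammaStar : ℝ := (Real.sqrt 7 - 2) / 3

/-- The vector `x⁽ⁿ⁾` with `⌊p* n⌋` entries equal to `1` and the remaining
entries equal to `1/n`. -/
noncomputable def xVec (n : ℕ) : Fin n → ℝ :=
  fun i => if (i : ℕ) < ⌊pStar * n⌋₊ then 1 else 1 / n

/-- The constant vector `y⁽ⁿ⁾ = (γ*, …, γ*)`. -/
noncomputable def yVec (n : ℕ) : Fin n → ℝ := fun _ => gammaStar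

lemma pStar_pos : 0 < pStar := by
  unfold pStar
  nlinarith [Real.sq_sqrt (show (0 : ℝ) ≤ 7 by norm_num), Real.sqrt_nonneg 7]

lemma pStar_lt_gammaStar : pStar < gammaStar := by
  unfold pStar gammaStar
  nlinarith [Real.sq_sqrt (show (0 : ℝ) ≤ 7 by norm_num), Real.sqrt_nonneg 7]

lemma gammaStar_lt_one : gammaStar < 1 := by
  unfold gammaStar
  nlinarith [Real.sq_sqrt (show (0 : ℝ) ≤ 7 by norm_num), Real.sqrt_nonneg 7]

lemma pStar_add_gammaStar_cube : pStar + gammaStar ^ 3 = gammaStar - pStar := by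
  have h : Real.sqrt 7 ^ 2 = 7 := Real.sq_sqrt (by norm_num)
  unfold pStar gammaStar
  linear_combination ((Real.sqrt 7 - 6) / 27) * h

lemma pStar_sub_gammaStar_sq : pStar - gammaStar ^ 2 = (7 * Real.sqrt 7 - 17) / 27 := by
  have h : Real.sqrt 7 ^ 2 = 7 := Real.sq_sqrt (by norm_num)
  unfold pStar gammaStar
  linear_combination (-1 / 9) * h

lemma floor_pStar_mul_le (n : ℕ) : ⌊pStar * n⌋₊ ≤ n := by
  have hp : pStar ≤ 1 := (pStar_lt_gammaStar.trans gammaStar_lt_one).le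
  exact Nat.floor_le_of_le (mul_le_of_le_one_left n.cast_nonneg hp)

lemma powerSum_xVec (n k : ℕ) :
    ∑ i, xVec n i ^ k = ⌊pStar * n⌋₊ + (n - ⌊pStar * n⌋₊ : ℝ) * (1 / n) ^ k := by
  have hm := floor_pStar_mul_le n
  have h : ∀ i : Fin n, xVec n i ^ k =
      (fun j : ℕ => if j < ⌊pStar * n⌋₊ then (1 : ℝ) else (1 / n) ^ k) i := by
    intro i
    simp only [xVec]
    split_ifs <;> simp
  rw [Finset.sum_congr rfl fun i _ => h i,
    Fin.sum_univ_eq_sum_range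
      (fun j : ℕ => if j < ⌊pStar * n⌋₊ then (1 : ℝ) else (1 / n) ^ k) n,
    ← Finset.sum_range_add_sum_Ico _ hm,
    Finset.sum_congr rfl fun j hj => if_pos (Finset.mem_range.1 hj),
    Finset.sum_congr rfl fun j hj => if_neg (Finset.mem_Ico.1 hj).1.not_gt]
  simp [Nat.cast_sub hm]

lemma powerSum_yVec (n k : ℕ) : ∑ i, yVec n i ^ k = n * gammaStar ^ k := by
  simp [yVec]

lemma tendsto_powerSum_xVec (k : ℕ) (hk : k ≠ 0) :
    Tendsto (fun n : ℕ => (∑ i, xVec n i ^ k) / n) atTop (nhds pStar) := by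
  have hfloor : Tendsto (fun n : ℕ => (⌊pStar * n⌋₊ : ℝ) / n) atTop (nhds pStar) :=
    (tendsto_nat_floor_mul_div_atTop pStar_pos.le).comp tendsto_natCast_atTop_atTop
  have hpow : Tendsto (fun n : ℕ => (1 / (n : ℝ)) ^ k) atTop (nhds 0) := by
    simpa [hk] using (tendsto_one_div_atTop_nhds_zero_nat (𝕜 := ℝ)).pow k
  have h := hfloor.add ((hfloor.const_sub 1).mul hpow)
  rw [mul_zero, add_zero] at h
  refine h.congr' ?_
  filter_upwards [eventually_ne_atTop 0] with n hn
  have hn' : (n : ℝ) ≠ 0 := Nat.cast_ne_zero.2 hn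
  rw [powerSum_xVec, add_div, mul_div_right_comm, sub_div, div_self hn']

theorem stmt_7 :
    Tendsto (fun n : ℕ => Q (xVec n) (yVec n) / n) atTop
      (nhds ((7 * Real.sqrt 7 - 17) / 27)) := by
  have hx (k : ℕ) (hk : k ≠ 0) := tendsto_powerSum_xVec k hk
  have hpos : 0 < gammaStar - pStar := sub_pos.2 pStar_lt_gammaStar
  have hden : pStar + gammaStar ^ 3 ≠ 0 := by
    rw [pStar_add_gammaStar_cube]; exact hpos.ne'
  have hlim := (((hx 1 one_ne_zero).sub_const gammaStar).mul
    ((hx 2 two_ne_zero).const_sub (gammaStar ^ 2))).div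
      ((hx 3 three_ne_zero).add_const (gammaStar ^ 3)) hden
  have hval : (pStar - gammaStar) * (gammaStar ^ 2 - pStar) / (pStar + gammaStar ^ 3) =
      (7 * Real.sqrt 7 - 17) / 27 := by
    rw [← pStar_sub_gammaStar_sq, div_eq_iff hden, pStar_add_gammaStar_cube]
    ring
  rw [hval] at hlim
  refine hlim.congr' ?_
  filter_upwards [eventually_ne_atTop 0] with n hn
  have hn' : (n : ℝ) ≠ 0 := Nat.cast_ne_zero.2 hn
  have hy1 : ∑ i, yVec n i = n * gammaStar := by simpa using powerSum_yVec n 1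
  simp only [Pi.div_apply, Q, powerSum_yVec, hy1, pow_one]
  generalize ∑ i, xVec n i = a
  generalize ∑ i, xVec n i ^ 2 = b
  generalize ∑ i, xVec n i ^ 3 = c
  -- The identity holds for every denominator `d`, also for `d = 0` because `x / 0 = 0`.
  have e1 : a / n - gammaStar = (a - n * gammaStar) / n := by field_simp
  have e2 : gammaStar ^ 2 - b / n = (n * gammaStar ^ 2 - b) / n := by field_simp
  have e3 : c / n + gammaStar ^ 3 = (c + n * gammaStar ^ 3) / n := by field_simp
  rw [e1, e2, e3]
  generalize c + n * gammaStar ^ 3 = d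
  rcases eq_or_ne d 0 with rfl | hd
  · simp
  · field_simp
end

section
/- The function f(p, γ) := (p − γ)·(−p + γ²) / (p + γ³) on the open square (0,1)² attains a global maximum at the point (p*, γ*) with p* := (16 − 5√7)/27 and γ* := (√7 − 2)/3, and the maximal value equals c* := (7√7 − 17)/27; that is, f(p, γ) ≤ c* for all (p, γ) ∈ (0,1)², with equality at (p*, γ*). -/
/-!
Write `s = √7` and `c = (7s - 17)/27`. Clearing the positive denominator, `f p γ ≤ c` says that the
quadratic `p² - (γ + γ² - c) p + (1 + c) γ³` is nonnegative. Its discriminant factors as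
`(γ - γ*)² q(γ)` with `q(γ) = γ² - (22 + 10s)/27 · γ + (32 - 10s)/81`. The convex function `q` is
negative at `1/20` and at `1`, so the discriminant is nonpositive for `γ ∈ [1/20, 1)`. For
`γ < 1/20` one has `γ + γ² < c`, and all terms of the quadratic are nonnegative.
-/

/-- The function `f(p, γ) = (p - γ)(-p + γ²)/(p + γ³)`. -/
noncomputable def f (p γ : ℝ) : ℝ := (p - γ) * (-p + γ^2) / (p + γ^3)

/-- The inequality `f p γ ≤ c*` with the denominator cleared; `s` stands for `√7`. -/
lemma quadratic_nonneg {s p γ : ℝ} (hs : s ^ 2 = 7) (h1 : 2.645 < s) (h2 : s < 2.646)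
    (hp : 0 < p) (hγ : 0 < γ) (hγ1 : γ < 1) :
    0 ≤ p ^ 2 - (γ + γ ^ 2 - (7 * s - 17) / 27) * p + (1 + (7 * s - 17) / 27) * γ ^ 3 := by
  rcases lt_or_ge γ (1 / 20) with h | h
  · have hlin : 0 ≤ (7 * s - 17) / 27 - γ - γ ^ 2 := by nlinarith
    have hc : 0 ≤ 1 + (7 * s - 17) / 27 := by linarith
    nlinarith [mul_nonneg hlin hp.le, mul_nonneg hc (pow_pos hγ 3).le, sq_nonneg p]
  · have hq : γ ^ 2 - (22 + 10 * s) / 27 * γ + (32 - 10 * s) / 81 ≤ 0 := by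
      -- `(γ - 1/20)(γ - 1) ≤ 0` bounds `γ²` by its chord on `[1/20, 1]`.
      nlinarith [mul_nonneg (sub_nonneg.2 h) (sub_nonneg.2 hγ1.le),
        mul_nonneg (sub_nonneg.2 h) (sub_nonneg.2 h1.le)]
    have hD : (γ + γ ^ 2 - (7 * s - 17) / 27) ^ 2 - 4 * (1 + (7 * s - 17) / 27) * γ ^ 3
        = (γ - (s - 2) / 3) ^ 2
          * (γ ^ 2 - (22 + 10 * s) / 27 * γ + (32 - 10 * s) / 81) := by
      have h3 : s ^ 3 = 7 * s := by rw [pow_succ, hs]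
      ring_nf
      rw [h3, hs]
      ring
    have hD' := mul_nonpos_of_nonneg_of_nonpos (sq_nonneg (γ - (s - 2) / 3)) hq
    nlinarith [sq_nonneg (2 * p - (γ + γ ^ 2 - (7 * s - 17) / 27))]

theorem stmt_8 :
    pStar ∈ Set.Ioo (0 : ℝ) 1 ∧ gammaStar ∈ Set.Ioo (0 : ℝ) 1 ∧
      (∀ p γ : ℝ, p ∈ Set.Ioo (0 : ℝ) 1 → γ ∈ Set.Ioo (0 : ℝ) 1 →
        f p γ ≤ (7 * Real.sqrt 7 - 17) / 27) ∧
      f pStar gammaStar = (7 * Real.sqrt 7 - 17) / 27 := by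
  have hs : Real.sqrt 7 ^ 2 = 7 := Real.sq_sqrt (by norm_num)
  have h1 : 2.645 < Real.sqrt 7 := Real.lt_sqrt_of_sq_lt (by norm_num)
  have h2 : Real.sqrt 7 < 2.646 := (Real.sqrt_lt' (by norm_num)).2 (by norm_num)
  unfold pStar gammaStar f
  generalize Real.sqrt 7 = s at *
  refine ⟨⟨by linarith, by linarith⟩, ⟨by linarith, by linarith⟩, ?_, ?_⟩
  · rintro p γ ⟨hp, -⟩ ⟨hγ, hγ1⟩
    rw [div_le_iff₀ (by positivity)]
    linarith [quadratic_nonneg hs h1 h2 hp hγ hγ1]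
  · have h3 : s ^ 3 = 7 * s := by rw [pow_succ, hs]
    -- At the maximizer the denominator `p* + γ*³` equals `γ* - p*`.
    have hden : (16 - 5 * s) / 27 + ((s - 2) / 3) ^ 3
        = (s - 2) / 3 - (16 - 5 * s) / 27 := by
      ring_nf
      rw [h3, hs]
      ring
    have hpos : (s - 2) / 3 - (16 - 5 * s) / 27 ≠ 0 := by
      apply ne_of_gt
      linarith
    rw [hden, div_eq_iff hpos]
    linear_combination ((16 - 5 * s) / 27 - (s - 2) / 3) / 9 * hs
end

section
/- For every d ≥ 2, every matrix M = (m_{ij}) in the set 𝓜_d has non-negative diagonal elements: m_{ii} ≥ 0 for all 1 ≤ i ≤ d. -/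
/-!
Take `s = (1, …, 1)` and let `z` have `i`-th coordinate `1` and all other coordinates `t > 0`.
Then `Ψ_M(z, s)` is a polynomial in `t` which is positive for `t > 0`, so its value at `t = 0`,
which is `m_{ii}`, is non-negative by continuity.
-/


open Finset

/-- `Ψ_M(z, s) = ∑_l (m_{ll} z_l³ + s_l z_l ∑_{k ≠ l} m_{lk} s_k z_k²)`. -/
noncomputable def Psi {d : ℕ} (M : Matrix (Fin d) (Fin d) ℝ)
    (z s : Fin d → ℝ) : ℝ :=
  ∑ l, (M l l * (z l)^3 + s l * z l * ∑ k ∈ univ \ {l}, M l k * s k * (z k)^2)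

/-- The set `𝓜_d` of matrices `M` with `Ψ_M(z, s) > 0` for all sign vectors `s`
and all `z` with strictly positive entries. -/
def McalM (d : ℕ) : Set (Matrix (Fin d) (Fin d) ℝ) :=
  {M | ∀ s z : Fin d → ℝ, (∀ i, s i = 1 ∨ s i = -1) → (∀ i, 0 < z i) →
    0 < Psi M z s}

theorem stmt_11 (d : ℕ) (hd : 2 ≤ d) (M : Matrix (Fin d) (Fin d) ℝ)
    (hM : M ∈ McalM d) : ∀ i : Fin d, 0 ≤ M i i := by
  intro i
  have hcont : Continuous fun t : ℝ => Psi M (fun j => if j = i then 1 else t) (fun _ => 1) := by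
    unfold Psi
    have hz : ∀ j : Fin d, Continuous fun t : ℝ => if j = i then (1 : ℝ) else t := by
      intro j
      split_ifs <;> fun_prop
    fun_prop
  -- At `t = 0` every mixed term `z_l z_k²` with `k ≠ l` vanishes.
  have h0 : Psi M (fun j => if j = i then 1 else (0 : ℝ)) (fun _ => 1) = M i i := by
    unfold Psi
    rw [Finset.sum_eq_single i]
    · rw [Finset.sum_eq_zero]
      · simp
      · intro k hk
        have hki : k ≠ i := by simpa using hk
        simp [hki]
    · intro l _ hl
      simp [hl]
    · simp
  have hlim := (hcont.tendsto 0).mono_left (nhdsWithin_le_nhds (s := Set.Ioi 0))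
  rw [h0] at hlim
  refine ge_of_tendsto hlim ?_
  filter_upwards [self_mem_nhdsWithin] with t ht
  refine (hM _ _ (fun _ => Or.inl rfl) fun j => ?_).le
  split_ifs
  · exact one_pos
  · exact ht
end

section
/- The number b_3 := 1 / (1 + sup{ Q(x,y) : x ∈ ℝ²_{>0}, y ∈ ℝ_{>0} }) is the unique positive root of the polynomial 20x⁴ + 60x³ + 9x² − 54x − 27, and it admits the explicit expression b_3 = (1/4)·( √( (3/5)·(39 + 16√6) ) − 3 ). -/
/-!
Write `b` for the claimed closed form; it is a positive root of the quartic and `b < 1`.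
It has to be shown that `c = 1 / b - 1` is the maximum of `Q`.

For fixed sum `s = x₁ + x₂ > y`, equalizing `x₁` and `x₂` increases the numerator of `Q` and
decreases its denominator; if `s ≤ y` then `Q ≤ 0`. So only `x₁ = x₂ = u` matters, where
`Q ≤ c` becomes `y³ - 2b y²u - 2b y u² + (2b + 2) u³ ≥ 0`. The quartic expresses, up to a
factor, that the cubic `t³ - 2b t² - 2b t + 2b + 2` has a double root `t₀ = critPt b`, so the
form factors as `(y - t₀u)² (y + 2(t₀ - b)u)` with `t₀ ≥ b`, and equality holds at
`x = (1, 1)`, `y = t₀`.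
-/

open Finset Filter

/-- The threshold `b_d`. -/
noncomputable def bSeq (d : ℕ) : ℝ :=
  1 / (1 + sSup {q : ℝ | ∃ (x : Fin ((d + 1) / 2) → ℝ) (y : Fin (d / 2) → ℝ),
    (∀ i, 0 < x i) ∧ (∀ i, 0 < y i) ∧ q = Q x y})

/-- The closed form of the threshold. -/
noncomputable def bVal : ℝ :=
  (1 / 4) * (Real.sqrt ((3 / 5) * (39 + 16 * Real.sqrt 6)) - 3)

/-- The double root of `t³ - 2b t² - 2b t + 2b + 2` when `b` solves the quartic; it is the root of
the linear remainder of this cubic modulo its derivative. -/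
noncomputable def critPt (b : ℝ) : ℝ := (9 + 9 * b - 2 * b ^ 2) / (6 * b + 4 * b ^ 2)

lemma bVal_spec : 0 < bVal ∧ bVal < 1 ∧
    20 * bVal ^ 4 + 60 * bVal ^ 3 + 9 * bVal ^ 2 - 54 * bVal - 27 = 0 := by
  have h6 : Real.sqrt 6 ^ 2 = 6 := Real.sq_sqrt (by norm_num)
  have h60 := Real.sqrt_nonneg 6
  have h6u : Real.sqrt 6 < 5 / 2 := by
    rw [Real.sqrt_lt' (by norm_num)]; norm_num
  have hR : Real.sqrt ((3 / 5) * (39 + 16 * Real.sqrt 6)) ^ 2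
      = (3 / 5) * (39 + 16 * Real.sqrt 6) := Real.sq_sqrt (by positivity)
  have hR0 := Real.sqrt_nonneg ((3 / 5) * (39 + 16 * Real.sqrt 6))
  have hb : 4 * bVal + 3 = Real.sqrt ((3 / 5) * (39 + 16 * Real.sqrt 6)) := by
    unfold bVal; ring
  rw [← hb] at hR hR0
  refine ⟨by nlinarith, by nlinarith, ?_⟩
  -- Isolating `√6` and squaring yields the quartic.
  have hs : Real.sqrt 6 = (5 * (4 * bVal + 3) ^ 2 - 117) / 48 := by linarith
  rw [hs] at h6
  linear_combination (36 / 5 : ℝ) * h6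

lemma quartic_unique {b x : ℝ} (hb : 0 < b) (hx : 0 < x)
    (h : 20 * b ^ 4 + 60 * b ^ 3 + 9 * b ^ 2 - 54 * b - 27 = 0)
    (h' : 20 * x ^ 4 + 60 * x ^ 3 + 9 * x ^ 2 - 54 * x - 27 = 0) : x = b := by
  have hpos : 0 < b * (20 * x ^ 3 + 20 * x ^ 2 * b + 20 * x * b ^ 2 + 60 * x ^ 2 + 60 * x * b
      + 9 * x) + 27 := by positivity
  have : (x - b) * (b * (20 * x ^ 3 + 20 * x ^ 2 * b + 20 * x * b ^ 2 + 60 * x ^ 2 + 60 * x * b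
      + 9 * x) + 27) = 0 := by
    linear_combination b * h' - x * h
  rcases mul_eq_zero.mp this with h0 | h0
  · linarith
  · exact absurd h0 hpos.ne'

lemma critPt_deriv {b : ℝ} (hb : 0 < b)
    (h : 20 * b ^ 4 + 60 * b ^ 3 + 9 * b ^ 2 - 54 * b - 27 = 0) :
    3 * critPt b ^ 2 = 4 * b * critPt b + 2 * b := by
  have hd : 6 * b + 4 * b ^ 2 ≠ 0 := by positivity
  have e : critPt b * (6 * b + 4 * b ^ 2) = 9 + 9 * b - 2 * b ^ 2 := by
    unfold critPt; field_simp
  have : (6 * b + 4 * b ^ 2) ^ 2 * (3 * critPt b ^ 2 - (4 * b * critPt b + 2 * b)) = 0 := by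
    linear_combination (3 * (critPt b * (6 * b + 4 * b ^ 2) + (9 + 9 * b - 2 * b ^ 2))
      - 4 * b * (6 * b + 4 * b ^ 2)) * e - 9 * h
  have := (mul_eq_zero.mp this).resolve_left (pow_ne_zero 2 hd)
  linarith

lemma critPt_root {b : ℝ} (hb : 0 < b)
    (h : 20 * b ^ 4 + 60 * b ^ 3 + 9 * b ^ 2 - 54 * b - 27 = 0) :
    critPt b ^ 3 - 2 * b * critPt b ^ 2 - 2 * b * critPt b + 2 * b + 2 = 0 := by
  have e : critPt b * (6 * b + 4 * b ^ 2) = 9 + 9 * b - 2 * b ^ 2 := by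
    have hd : 6 * b + 4 * b ^ 2 ≠ 0 := by positivity
    unfold critPt; field_simp
  -- Division of the cubic by its derivative, with remainder.
  linear_combination (critPt b / 3 - 2 * b / 9) * critPt_deriv hb h - (2 / 9 : ℝ) * e

lemma critPt_ge {b : ℝ} (hb : 0 < b) (hb1 : b < 1) : b ≤ critPt b := by
  unfold critPt
  rw [le_div_iff₀ (by positivity)]
  nlinarith [mul_pos hb hb, mul_pos (mul_pos hb hb) (sub_pos.2 hb1)]

/-- The bound `Q ≤ 1 / b - 1` in the case `x₁ = x₂ = u`, with denominators cleared. -/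
lemma cubic_form_nonneg {b u y : ℝ} (hb : 0 < b) (hb1 : b < 1)
    (h : 20 * b ^ 4 + 60 * b ^ 3 + 9 * b ^ 2 - 54 * b - 27 = 0) (hu : 0 < u) (hy : 0 < y) :
    0 ≤ y ^ 3 - 2 * b * y ^ 2 * u - 2 * b * y * u ^ 2 + (2 * b + 2) * u ^ 3 := by
  have hge := critPt_ge hb hb1
  have e : y ^ 3 - 2 * b * y ^ 2 * u - 2 * b * y * u ^ 2 + (2 * b + 2) * u ^ 3
      = (y - critPt b * u) ^ 2 * (y + 2 * (critPt b - b) * u) := by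
    linear_combination (y * u ^ 2 - critPt b * u ^ 3) * critPt_deriv hb h
      + u ^ 3 * critPt_root hb h
  rw [e]
  have : 0 ≤ (critPt b - b) * u := mul_nonneg (by linarith) hu.le
  exact mul_nonneg (sq_nonneg _) (by linarith)

/-- The bound `Q ≤ 1 / b - 1` with denominators cleared. -/
lemma Q_bound {b p q y : ℝ} (hb : 0 < b) (hb1 : b < 1)
    (h : 20 * b ^ 4 + 60 * b ^ 3 + 9 * b ^ 2 - 54 * b - 27 = 0)
    (hp : 0 < p) (hq : 0 < q) (hy : 0 < y) :
    b * ((p + q - y) * (y ^ 2 - (p ^ 2 + q ^ 2))) ≤ (1 - b) * (p ^ 3 + q ^ 3 + y ^ 3) := by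
  have hb' : 0 < 1 - b := by linarith
  rcases le_total (p + q) y with hs | hs
  · have h1 : 0 ≤ y ^ 2 - (p ^ 2 + q ^ 2) := by nlinarith [mul_pos hp hq]
    have h2 : (p + q - y) * (y ^ 2 - (p ^ 2 + q ^ 2)) ≤ 0 :=
      mul_nonpos_of_nonpos_of_nonneg (by linarith) h1
    have h3 : 0 ≤ (1 - b) * (p ^ 3 + q ^ 3 + y ^ 3) := by positivity
    nlinarith
  · have hc := cubic_form_nonneg hb hb1 h (half_pos (add_pos hp hq)) hy
    -- Contribution of replacing `p`, `q` by their mean.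
    have hd : 0 ≤ (p - q) ^ 2 * (b * (p + q - y) / 2 + (1 - b) * (3 * (p + q)) / 4) := by
      have : 0 ≤ p + q - y := by linarith
      positivity
    linear_combination hc + hd

lemma isGreatest_Q {b : ℝ} (hb : 0 < b) (hb1 : b < 1)
    (h : 20 * b ^ 4 + 60 * b ^ 3 + 9 * b ^ 2 - 54 * b - 27 = 0) :
    IsGreatest {q : ℝ | ∃ (x : Fin ((3 + 1) / 2) → ℝ) (y : Fin (3 / 2) → ℝ),
      (∀ i, 0 < x i) ∧ (∀ i, 0 < y i) ∧ q = Q x y} (1 / b - 1) := by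
  have hQ : ∀ (x : Fin 2 → ℝ) (y : Fin 1 → ℝ), Q x y =
      ((x 0 + x 1 - y 0) * (y 0 ^ 2 - (x 0 ^ 2 + x 1 ^ 2))) / (x 0 ^ 3 + x 1 ^ 3 + y 0 ^ 3) := by
    intro x y
    simp [Q, Fin.sum_univ_two]
  constructor
  · have ht : 0 < critPt b := hb.trans_le (critPt_ge hb hb1)
    refine ⟨(fun _ => 1 : Fin 2 → ℝ), (fun _ => critPt b : Fin 1 → ℝ), fun _ => one_pos,
      fun _ => ht, ?_⟩
    refine Eq.trans ?_ (hQ _ _).symm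
    rw [eq_div_iff (by positivity)]
    field_simp
    linear_combination critPt_root hb h
  · rintro _ ⟨x, y, hx, hy, rfl⟩
    refine (hQ x y).trans_le ?_
    have h0 : 0 < x 0 := hx 0
    have h1 : 0 < x 1 := hx 1
    have h2 : 0 < y 0 := hy 0
    have hB := Q_bound hb hb1 h h0 h1 h2
    have hc : 1 / b - 1 = (1 - b) / b := by field_simp
    rw [hc, div_le_div_iff₀ (by positivity) hb]
    linarith

lemma bSeq_three : bSeq 3 = bVal := by
  obtain ⟨hb, hb1, h⟩ := bVal_spec
  rw [bSeq, (isGreatest_Q hb hb1 h).csSup_eq]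
  simp

theorem stmt_19 :
    (0 < bSeq 3 ∧
        20 * bSeq 3 ^ 4 + 60 * bSeq 3 ^ 3 + 9 * bSeq 3 ^ 2 - 54 * bSeq 3 - 27 = 0 ∧
        ∀ x : ℝ, 0 < x → 20 * x ^ 4 + 60 * x ^ 3 + 9 * x ^ 2 - 54 * x - 27 = 0 →
          x = bSeq 3) ∧
      bSeq 3 = (1 / 4) * (Real.sqrt ((3 / 5) * (39 + 16 * Real.sqrt 6)) - 3) := by
  obtain ⟨hb, -, h⟩ := bVal_spec
  rw [bSeq_three]
  exact ⟨⟨hb, h, fun x hx hx' => quartic_unique hb hx h hx'⟩, rfl⟩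
end
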